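/- arXiv:1312.5156 — 2 statements merged into one kernel-verified Lean document; each statement's English description precedes it below -/
import Mathlib

section
/- Let 𝕋² ⊂ ℝ³ be the standard torus 𝕋² = {((2+cos φ)cos θ, (2+cos φ)sin θ, sin φ) : θ, φ ∈ [0,2π]}, with inward unit normal ν(θ,φ) = -(cos θ cos φ, sin θ cos φ, sin φ). For every γ > 0 there exists a continuous map C_γ : 𝕋² → S² satisfying C_γ(P) · ν(P) > 0 for all P ∈ 𝕋², whose image is contained in the equatorial band E_γ = {n ∈ S² : |n · e₃| < γ}, where e₃ = (0,0,1). -/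
/-!
In the orthonormal frame `(u_r, u_θ, e₃)` of cylindrical coordinates the inward normal is
`-(cos φ) u_r - (sin φ) e₃`. For `δ > 0` the field
`W = -(cos φ) u_r + u_θ - δ (sin φ) e₃` satisfies `W · ν = cos² φ + δ sin² φ > 0`, and its
rotational component `u_θ` forces `‖W‖ ≥ 1`, while `|W · e₃| ≤ δ`. Hence `W / ‖W‖` with
`δ = γ / 2` is the required field. On the torus `r = √(x² + y²) = 2 + cos φ`, so the positive
multiple `r W` is given by a formula in `x, y, z` which is continuous on all of `ℝ³`.
-/

open Metric Set Real
open scoped RealInnerProductSpace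

/-- Parametrization of the standard torus in ℝ³. -/
noncomputable def torusParam (θ φ : ℝ) : EuclideanSpace ℝ (Fin 3) :=
  (WithLp.equiv 2 (Fin 3 → ℝ)).symm
    ![(2 + Real.cos φ) * Real.cos θ, (2 + Real.cos φ) * Real.sin θ, Real.sin φ]

/-- The standard torus 𝕋² ⊂ ℝ³. -/
noncomputable def stdTorus : Set (EuclideanSpace ℝ (Fin 3)) :=
  {x | ∃ θ ∈ Set.Icc (0 : ℝ) (2 * π), ∃ φ ∈ Set.Icc (0 : ℝ) (2 * π), x = torusParam θ φ}

/-- The inward unit normal to the solid torus at the point torusParam θ φ. -/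
noncomputable def torusNormal (θ φ : ℝ) : EuclideanSpace ℝ (Fin 3) :=
  (WithLp.equiv 2 (Fin 3 → ℝ)).symm
    ![-(Real.cos θ * Real.cos φ), -(Real.sin θ * Real.cos φ), -Real.sin φ]

/-- The third standard basis vector e₃ of ℝ³. -/
noncomputable def e₃ : EuclideanSpace ℝ (Fin 3) := EuclideanSpace.single (2 : Fin 3) (1 : ℝ)

/-- The unnormalised field `r (-(r - 2) u_r + u_θ - δ z e₃)`, with `r = √(x² + y²)`; on the torus
`r - 2 = cos φ` and `z = sin φ`. The factor `r` clears the denominators of `u_r` and `u_θ`. -/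
noncomputable def bandField (δ : ℝ) (P : EuclideanSpace ℝ (Fin 3)) : EuclideanSpace ℝ (Fin 3) :=
  !₂[-((√(P 0 ^ 2 + P 1 ^ 2) - 2) * P 0) - P 1,
    -((√(P 0 ^ 2 + P 1 ^ 2) - 2) * P 1) + P 0,
    -(δ * √(P 0 ^ 2 + P 1 ^ 2) * P 2)]

lemma continuous_bandField (δ : ℝ) : Continuous (bandField δ) := by
  unfold bandField
  refine (PiLp.continuous_toLp 2 _).comp (continuous_pi fun i => ?_)
  fin_cases i <;> simp <;> fun_prop

lemma bandField_torusParam (δ θ φ : ℝ) :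
    bandField δ (torusParam θ φ) = (2 + cos φ) •
      !₂[-(cos φ * cos θ) - sin θ, -(cos φ * sin θ) + cos θ, -(δ * sin φ)] := by
  have hr : √(((2 + cos φ) * cos θ) ^ 2 + ((2 + cos φ) * sin θ) ^ 2) = 2 + cos φ := by
    rw [show ((2 + cos φ) * cos θ) ^ 2 + ((2 + cos φ) * sin θ) ^ 2 = (2 + cos φ) ^ 2 by
      linear_combination (2 + cos φ) ^ 2 * sin_sq_add_cos_sq θ]
    exact Real.sqrt_sq (by linarith [neg_one_le_cos φ])
  ext i
  fin_cases i <;> simp [bandField, torusParam, hr] <;> ring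

lemma le_norm_bandField (δ θ φ : ℝ) :
    2 + cos φ ≤ ‖bandField δ (torusParam θ φ)‖ := by
  have hr : 0 < 2 + cos φ := by linarith [neg_one_le_cos φ]
  rw [bandField_torusParam, norm_smul, Real.norm_of_nonneg hr.le]
  refine le_mul_of_one_le_right hr.le ?_
  rw [EuclideanSpace.norm_eq, Real.one_le_sqrt]
  simp only [Fin.sum_univ_three, Real.norm_eq_abs, sq_abs]
  simp
  nlinarith [sin_sq_add_cos_sq θ, sq_nonneg (cos φ), sq_nonneg (δ * sin φ)]

lemma inner_bandField_torusNormal (δ θ φ : ℝ) :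
    ⟪bandField δ (torusParam θ φ), torusNormal θ φ⟫ =
      (2 + cos φ) * (cos φ ^ 2 + δ * sin φ ^ 2) := by
  rw [bandField_torusParam, real_inner_smul_left]
  congr 1
  simp [torusNormal, PiLp.inner_apply, Fin.sum_univ_three]
  linear_combination cos φ ^ 2 * sin_sq_add_cos_sq θ

lemma inner_bandField_e₃ (δ θ φ : ℝ) :
    ⟪bandField δ (torusParam θ φ), e₃⟫ = -((2 + cos φ) * (δ * sin φ)) := by
  rw [bandField_torusParam, real_inner_smul_left]
  simp [e₃, PiLp.inner_apply]

/-- For every γ > 0 there is a continuous field of pseudonormals on the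
standard torus whose image lies in the equatorial band E_γ of S². -/
theorem statement9 (γ : ℝ) (hγ : 0 < γ) :
    ∃ C : EuclideanSpace ℝ (Fin 3) → EuclideanSpace ℝ (Fin 3),
      ContinuousOn C stdTorus ∧
      (∀ P ∈ stdTorus, ‖C P‖ = 1) ∧
      (∀ θ ∈ Set.Icc (0 : ℝ) (2 * π), ∀ φ ∈ Set.Icc (0 : ℝ) (2 * π),
        0 < ⟪C (torusParam θ φ), torusNormal θ φ⟫) ∧
      (∀ P ∈ stdTorus, |⟪C P, e₃⟫| < γ) := by
  have hr (φ : ℝ) : 0 < 2 + cos φ := by linarith [neg_one_le_cos φ]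
  have hpos (θ φ : ℝ) : 0 < ‖bandField (γ / 2) (torusParam θ φ)‖ :=
    (hr φ).trans_le (le_norm_bandField _ θ φ)
  refine ⟨fun P => ‖bandField (γ / 2) P‖⁻¹ • bandField (γ / 2) P, ?_, ?_, ?_, ?_⟩
  · refine ContinuousOn.smul (ContinuousOn.inv₀ (continuous_bandField _).norm.continuousOn ?_)
      (continuous_bandField _).continuousOn
    rintro P ⟨θ, -, φ, -, rfl⟩
    exact (hpos θ φ).ne'
  · rintro P ⟨θ, -, φ, -, rfl⟩
    rw [norm_smul, norm_inv, norm_norm, inv_mul_cancel₀ (hpos θ φ).ne']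
  · intro θ _ φ _
    rw [real_inner_smul_left, inner_bandField_torusNormal]
    refine mul_pos (inv_pos.2 (hpos θ φ)) (mul_pos (hr φ) ?_)
    -- `cos φ` and `sin φ` do not vanish simultaneously
    rcases eq_or_ne (sin φ) 0 with h | h
    · have := sin_sq_add_cos_sq φ
      rw [h] at this ⊢
      linarith
    · positivity
  · rintro P ⟨θ, -, φ, -, rfl⟩
    rw [real_inner_smul_left, inner_bandField_e₃, abs_mul, abs_inv, abs_norm, abs_neg, abs_mul,
      abs_mul, abs_of_pos (hr φ), abs_of_pos (half_pos hγ), inv_mul_lt_iff₀ (hpos θ φ)]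
    calc (2 + cos φ) * (γ / 2 * |sin φ|) ≤ (2 + cos φ) * (γ / 2 * 1) := by
          gcongr
          · exact (hr φ).le
          · exact abs_sin_le_one φ
      _ < (2 + cos φ) * γ := by
          have := hr φ
          gcongr
          linarith
      _ ≤ ‖bandField (γ / 2) (torusParam θ φ)‖ * γ := by
          gcongr
          exact le_norm_bandField _ θ φ
end

section
/- Let Ω ⊂ ℝ^m be a connected open set and let U be a connected component of ℝ^m ∖ cl(Ω). Then the boundary ∂U is connected. -/
/-!
Let `K = closure Ω`. The component `U` of `Kᶜ` is open, and `frontier U = closure U ∩ Uᶜ` is the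
intersection of two closed sets covering `ℝ^m`. Both are connected: `closure U` because `U` is, and
`Uᶜ` because it is the union of the connected set `K` with the closures of the other components of
`Kᶜ`, each of which meets `K` (`isPreconnected_compl_component`).

It remains to use that `ℝ^m` is unicoherent: if two closed connected sets `A`, `B` cover a simply
connected space, then `A ∩ B` is connected (`isPreconnected_inter_of_union_eq_univ`). Were `A ∩ B`
the disjoint union of nonempty closed sets `C` and `D`, one could take a Urysohn function `g`, equal
to `0` on `C` and to `1` on `D`, and glue `exp (iπg)` on `A` with `exp (-iπg)` on `B` to a map into
the circle. Its lift `h` to `ℝ` vanishing at a point of `C` equals `πg` on `A` and `-πg` on `B`, by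
uniqueness of lifts, so that `π = -π` at any point of `D`.
-/

open Metric Set

/-- Unicoherence of simply connected, locally path connected normal spaces. -/
theorem isPreconnected_inter_of_union_eq_univ {X : Type*} [TopologicalSpace X] [NormalSpace X]
    [SimplyConnectedSpace X] [LocallyPathConnectedSpace X] {A B : Set X}
    (hA : IsClosed A) (hB : IsClosed B) (hA' : IsPreconnected A) (hB' : IsPreconnected B)
    (hAB : A ∪ B = univ) : IsPreconnected (A ∩ B) := by
  classical
  rw [isPreconnected_closed_iff]
  rintro t t' ht ht' hsub ⟨c, hc, hct⟩ ⟨d, hd, hdt⟩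
  by_contra hne
  have hdisj : Disjoint (A ∩ B ∩ t) (A ∩ B ∩ t') := by
    rw [Set.disjoint_left]
    rintro y ⟨hy, hyt⟩ ⟨-, hyt'⟩
    exact hne ⟨y, hy, hyt, hyt'⟩
  obtain ⟨g, hg0, hg1, -⟩ := exists_continuous_zero_one_of_isClosed
    ((hA.inter hB).inter ht) ((hA.inter hB).inter ht') hdisj
  let f : X → Circle := fun y ↦
    if y ∈ A then Circle.exp (Real.pi * g y) else Circle.exp (-(Real.pi * g y))
  have hfA : EqOn f (fun y ↦ Circle.exp (Real.pi * g y)) A := fun y hy ↦ if_pos hy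
  have hfB : EqOn f (fun y ↦ Circle.exp (-(Real.pi * g y))) B := by
    intro y hy
    by_cases hyA : y ∈ A
    · -- On `A ∩ B` the two formulas agree, as `g` is `0` or `1` there and `exp (iπ) = exp (-iπ)`.
      rw [hfA hyA]
      rcases hsub ⟨hyA, hy⟩ with h | h
      · have : g y = 0 := hg0 ⟨⟨hyA, hy⟩, h⟩
        simp [this]
      · have : g y = 1 := hg1 ⟨⟨hyA, hy⟩, h⟩
        apply Circle.ext
        simp [this]
    · exact if_neg hyA
  have hf : Continuous f := by
    rw [← continuousOn_univ, ← hAB]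
    refine ContinuousOn.union_of_isClosed ?_ ?_ hA hB
    · exact ContinuousOn.congr (by fun_prop) hfA
    · exact ContinuousOn.congr (by fun_prop) hfB
  have hgc : g c = 0 := hg0 ⟨hc, hct⟩
  have hgd : g d = 1 := hg1 ⟨hd, hdt⟩
  obtain ⟨h, ⟨hhc, hh⟩, -⟩ := Circle.isCoveringMap_exp.existsUnique_continuousMap_lifts
    ⟨f, hf⟩ c 0 (by simp [hfA hc.1, hgc])
  have hh' : ∀ y, Circle.exp (h y) = f y := fun y ↦ congrFun hh y
  have eA : EqOn h (fun y ↦ Real.pi * g y) A :=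
    Circle.isCoveringMap_exp.eqOn_of_comp_eqOn hA' (by fun_prop) (by fun_prop)
      (fun y hy ↦ (hh' y).trans (hfA hy)) hc.1 (by simp [hhc, hgc])
  have eB : EqOn h (fun y ↦ -(Real.pi * g y)) B :=
    Circle.isCoveringMap_exp.eqOn_of_comp_eqOn hB' (by fun_prop) (by fun_prop)
      (fun y hy ↦ (hh' y).trans (hfB hy)) hc.2 (by simp [hhc, hgc])
  have h1 := (eA hd.1).symm.trans (eB hd.2)
  simp only [hgd] at h1
  linarith [Real.pi_pos]

/-- The boundary of a component of `Kᶜ` lies in `K`: a boundary point outside `K` would have its own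
component as an open neighbourhood meeting, hence equal to, the given one. -/
theorem frontier_component_subset {X : Type*} [TopologicalSpace X] [LocallyConnectedSpace X]
    {K : Set X} (hK : IsClosed K) (y : X) : frontier (connectedComponentIn Kᶜ y) ⊆ K := by
  intro z hz
  by_contra hzK
  have hV : IsOpen (connectedComponentIn Kᶜ y) := hK.isOpen_compl.connectedComponentIn
  have hW : IsOpen (connectedComponentIn Kᶜ z) := hK.isOpen_compl.connectedComponentIn
  rw [hV.frontier_eq] at hz
  obtain ⟨w, hwz, hwy⟩ := mem_closure_iff.1 hz.1 _ hW (mem_connectedComponentIn hzK)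
  apply hz.2
  rw [connectedComponentIn_eq hwy, ← connectedComponentIn_eq hwz]
  exact mem_connectedComponentIn hzK

theorem frontier_component_nonempty {X : Type*} [TopologicalSpace X] [PreconnectedSpace X]
    {K : Set X} (hne : K.Nonempty) {y : X} (hy : y ∉ K) :
    (frontier (connectedComponentIn Kᶜ y)).Nonempty := by
  rw [nonempty_frontier_iff]
  refine ⟨⟨y, mem_connectedComponentIn hy⟩, fun h ↦ ?_⟩
  obtain ⟨k, hk⟩ := hne
  exact connectedComponentIn_subset Kᶜ y (h ▸ mem_univ k) hk

theorem isPreconnected_compl_component {X : Type*} [TopologicalSpace X] [PreconnectedSpace X]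
    [LocallyConnectedSpace X] {K : Set X} (hK : IsClosed K) (hconn : IsConnected K) (x : X) :
    IsPreconnected (connectedComponentIn Kᶜ x)ᶜ := by
  obtain ⟨k, hk⟩ := hconn.nonempty
  have hKU : K ⊆ (connectedComponentIn Kᶜ x)ᶜ :=
    fun y hy hyU ↦ connectedComponentIn_subset _ _ hyU hy
  refine isPreconnected_of_forall k fun y hy ↦ ?_
  by_cases hyK : y ∈ K
  · exact ⟨K, hKU, hk, hyK, hconn.isPreconnected⟩
  obtain ⟨z, hz⟩ := frontier_component_nonempty hconn.nonempty hyK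
  refine ⟨K ∪ closure (connectedComponentIn Kᶜ y), union_subset hKU ?_, .inl hk,
    .inr (subset_closure (mem_connectedComponentIn hyK)),
    hconn.isPreconnected.union z (frontier_component_subset hK y hz) hz.1
      isPreconnected_connectedComponentIn.closure⟩
  refine closure_minimal (fun w hwy hwx ↦ hy ?_) hK.isOpen_compl.connectedComponentIn.isClosed_compl
  rw [connectedComponentIn_eq hwx, ← connectedComponentIn_eq hwy]
  exact mem_connectedComponentIn hyK

/-- If Ω ⊂ ℝ^m is a connected open set and U is a connected component of
ℝ^m ∖ cl(Ω), then ∂U is connected. -/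
theorem statement11 {m : ℕ} (Ω : Set (EuclideanSpace ℝ (Fin m)))
    (hopen : IsOpen Ω) (hconn : IsConnected Ω)
    (U : Set (EuclideanSpace ℝ (Fin m))) (x : EuclideanSpace ℝ (Fin m))
    (hx : x ∉ closure Ω) (hU : U = connectedComponentIn (closure Ω)ᶜ x) :
    IsConnected (frontier U) := by
  subst hU
  refine ⟨frontier_component_nonempty hconn.closure.nonempty hx, ?_⟩
  have hUo : IsOpen (connectedComponentIn (closure Ω)ᶜ x) :=
    isClosed_closure.isOpen_compl.connectedComponentIn
  rw [hUo.frontier_eq, sdiff_eq]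
  refine isPreconnected_inter_of_union_eq_univ isClosed_closure hUo.isClosed_compl
    isPreconnected_connectedComponentIn.closure
    (isPreconnected_compl_component isClosed_closure hconn.closure x) ?_
  exact eq_univ_of_subset (union_subset_union_left _ subset_closure) (union_compl_self _)
end
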